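/- arXiv:2601.02810 — 2 statements merged into one kernel-verified Lean document; each statement's English description precedes it below -/
import Mathlib

section
/- For every ϑ ∈ (−π/2, π/2) with ϑ ≠ 0, every ζ₀ ∈ ℝ and every fixed t ∈ ℝ, the single type-I dark soliton satisfies lim_{x→+∞} u_I(x,t) = −exp(2iϑ) and lim_{x→−∞} u_I(x,t) = −exp(2iϑ). In particular |u_I(x,t)| → 1 at both spatial infinities and u_I acquires no phase shift as x runs from −∞ to +∞. -/
/-!
The soliton depends on `(x, t)` only through `cosh ζ`, on which it acts as a Möbius map. At fixed
`t` the phase `ζ` is a non-constant affine function of `x`, so `cosh ζ → ∞` at both spatial ends and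
`u_I` tends to the value `Θ⁽¹⁾ / Θ⁽⁰⁾ = -p / conj p = -exp (2iϑ)` of that map at infinity. The
two-sided limit `|x| → ∞` is expressed by the filter `cobounded ℝ = atBot ⊔ atTop`.
-/

open Bornology Filter Topology
open scoped ComplexConjugate

theorem tendsto_mobius_cobounded {𝕜 : Type*} [NormedField 𝕜] (a A b : 𝕜) {B : 𝕜} (hB : B ≠ 0) :
    Tendsto (fun z => (a + A * z) / (b + B * z)) (cobounded 𝕜) (𝓝 (A / B)) := by
  have affine_inv (c C : 𝕜) : Tendsto (fun z => c * z⁻¹ + C) (cobounded 𝕜) (𝓝 C) := by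
    simpa using (tendsto_inv₀_cobounded.const_mul c).add_const C
  refine ((affine_inv a A).div (affine_inv b B) hB).congr' ?_
  filter_upwards [eventually_ne_cobounded 0] with z hz
  calc
    (a * z⁻¹ + A) / (b * z⁻¹ + B) = (a * z⁻¹ + A) * z / ((b * z⁻¹ + B) * z) :=
      (mul_div_mul_right _ _ hz).symm
    _ = (a + A * z) / (b + B * z) := by simp only [add_mul, inv_mul_cancel_right₀ hz]

theorem abs_le_cosh (x : ℝ) : |x| ≤ Real.cosh x :=
  calc
    |x| ≤ Real.sinh |x| := Real.self_le_sinh_iff.2 (abs_nonneg x)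
    _ ≤ Real.cosh |x| := (Real.sinh_lt_cosh |x|).le
    _ = Real.cosh x := Real.cosh_abs x

theorem tendsto_cosh_ofReal_cobounded :
    Tendsto (fun x : ℝ => Complex.cosh x) (cobounded ℝ) (cobounded ℂ) := by
  have hcosh : Tendsto Real.cosh (cobounded ℝ) atTop :=
    tendsto_atTop_mono abs_le_cosh tendsto_norm_cobounded_atTop
  simpa only [Function.comp_def, Complex.coe_algebraMap, Complex.ofReal_cosh] using
    (RCLike.tendsto_ofReal_atTop_cobounded ℂ).comp hcosh

theorem exp_ofReal_mul_I_div_conj (ϑ : ℝ) :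
    Complex.exp (ϑ * Complex.I) / conj (Complex.exp (ϑ * Complex.I)) =
      Complex.exp (2 * ϑ * Complex.I) := by
  rw [← Complex.exp_conj, ← Complex.exp_sub, map_mul, Complex.conj_ofReal, Complex.conj_I]
  ring_nf

/-- The coefficient `χ⁽ⁿ⁾` of the type-I dark soliton with spectral parameter `p`. It is meaningful
for `p ^ 2 ≠ conj p ^ 2` only; otherwise division by zero makes it `1`. -/
noncomputable def typeIChi (p : ℂ) (n : ℕ) : ℂ :=
  1 - 4 / (p ^ 2 - conj p ^ 2) ^ 2 * (p / conj p) ^ (2 * n)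

/-- The coefficient `Θ⁽ⁿ⁾` of the type-I dark soliton with spectral parameter `p`. It is meaningful
for `p.re ≠ 0` only; otherwise division by zero makes it `0`. -/
noncomputable def typeITheta (p : ℂ) (n : ℕ) : ℂ :=
  2 / (p + conj p) * (-(p / conj p)) ^ n

/-- The profile of the type-I dark soliton with spectral parameter `p`, as a function of the real
phase `ζ`. -/
noncomputable def typeIDarkSoliton (p : ℂ) (ζ : ℝ) : ℂ :=
  (typeIChi p 1 + typeITheta p 1 * Complex.cosh ζ) /
    (typeIChi p 0 + typeITheta p 0 * Complex.cosh ζ)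

/-- The phase `ζ(x,t)` of the type-I dark soliton with spectral parameter `p = exp (iϑ)`. -/
noncomputable def typeIPhase (ϑ ζ₀ x t : ℝ) : ℝ :=
  2 * Real.cos ϑ * (x + (4 - 2 * Real.cos (2 * ϑ)) * t) + ζ₀

theorem typeITheta_zero_ne_zero {p : ℂ} (hp : p.re ≠ 0) : typeITheta p 0 ≠ 0 := by
  simp [typeITheta, Complex.add_conj, hp]

theorem typeITheta_one_div_zero {p : ℂ} (hp : p.re ≠ 0) :
    typeITheta p 1 / typeITheta p 0 = -(p / conj p) := by
  have hsucc : typeITheta p 1 = typeITheta p 0 * -(p / conj p) := by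
    simp only [typeITheta, pow_zero, pow_one, mul_one]
  rw [hsucc, mul_div_cancel_left₀ _ (typeITheta_zero_ne_zero hp)]

theorem tendsto_typeIDarkSoliton_cobounded {p : ℂ} (hp : p.re ≠ 0) :
    Tendsto (typeIDarkSoliton p) (cobounded ℝ) (𝓝 (-(p / conj p))) := by
  rw [← typeITheta_one_div_zero hp]
  exact (tendsto_mobius_cobounded _ _ _ (typeITheta_zero_ne_zero hp)).comp
    tendsto_cosh_ofReal_cobounded

theorem tendsto_typeIPhase_cobounded {ϑ : ℝ} (hϑ : Real.cos ϑ ≠ 0) (ζ₀ t : ℝ) :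
    Tendsto (fun x => typeIPhase ϑ ζ₀ x t) (cobounded ℝ) (cobounded ℝ) :=
  (tendsto_add_const_cobounded ζ₀).comp <|
    (tendsto_mul_left_cobounded (mul_ne_zero two_ne_zero hϑ)).comp <|
      tendsto_add_const_cobounded ((4 - 2 * Real.cos (2 * ϑ)) * t)

-- Since `p ^ 2 - conj p ^ 2 = 2i sin (2ϑ)`, the hypothesis says that `χ⁽ⁿ⁾` and `Θ⁽ⁿ⁾` have nonzero
-- denominators.
theorem typeI_dark_soliton_spatial_asymptotics_general {ϑ : ℝ} (hϑ : Real.sin (2 * ϑ) ≠ 0)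
    (ζ₀ t : ℝ) :
    Tendsto (fun x => typeIDarkSoliton (Complex.exp (ϑ * Complex.I)) (typeIPhase ϑ ζ₀ x t))
      (cobounded ℝ) (𝓝 (-Complex.exp (2 * ϑ * Complex.I))) := by
  have hcos : Real.cos ϑ ≠ 0 := right_ne_zero_of_mul (Real.sin_two_mul ϑ ▸ hϑ)
  rw [← exp_ofReal_mul_I_div_conj]
  refine (tendsto_typeIDarkSoliton_cobounded ?_).comp (tendsto_typeIPhase_cobounded hcos ζ₀ t)
  rwa [Complex.exp_ofReal_mul_I_re]

/-- Spatial asymptotics of the single type-I dark soliton: at every fixed time `t`,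
`u_I(x,t) → -exp(2iϑ)` both as `x → +∞` and as `x → -∞` (so `|u_I| → 1` and no
phase shift is acquired). -/
theorem typeI_dark_soliton_spatial_asymptotics
    (ϑ ζ₀ : ℝ) (hϑ : ϑ ∈ Set.Ioo (-(Real.pi / 2)) (Real.pi / 2)) (hϑ0 : ϑ ≠ 0)
    (p : ℂ) (hp : p = Complex.exp (ϑ * Complex.I))
    (χ Θ : ℕ → ℂ)
    (hχ : ∀ n, χ n = 1 - (4 / (p ^ 2 - (starRingEnd ℂ) p ^ 2) ^ 2)
        * (p / (starRingEnd ℂ) p) ^ (2 * n))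
    (hΘ : ∀ n, Θ n = (2 / (p + (starRingEnd ℂ) p)) * (-(p / (starRingEnd ℂ) p)) ^ n)
    (ζ : ℝ → ℝ → ℝ)
    (hζ : ∀ x t, ζ x t = 2 * Real.cos ϑ * (x + (4 - 2 * Real.cos (2 * ϑ)) * t) + ζ₀)
    (u : ℝ → ℝ → ℂ)
    (hu : ∀ x t, u x t = (χ 1 + Θ 1 * Complex.cosh ((ζ x t : ℝ) : ℂ))
        / (χ 0 + Θ 0 * Complex.cosh ((ζ x t : ℝ) : ℂ))) :
    ∀ t : ℝ,
      Filter.Tendsto (fun x => u x t) Filter.atTop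
        (nhds (-Complex.exp (2 * (ϑ : ℂ) * Complex.I)))
      ∧ Filter.Tendsto (fun x => u x t) Filter.atBot
        (nhds (-Complex.exp (2 * (ϑ : ℂ) * Complex.I))) := by
  intro t
  have hsin : Real.sin (2 * ϑ) ≠ 0 := by
    rw [Ne, Real.sin_eq_zero_iff_of_lt_of_lt (by linarith [hϑ.1]) (by linarith [hϑ.2])]
    exact mul_ne_zero two_ne_zero hϑ0
  have hu_eq (x : ℝ) : u x t = typeIDarkSoliton p (typeIPhase ϑ ζ₀ x t) := by
    simp only [hu, hχ, hΘ, hζ, typeIDarkSoliton, typeIChi, typeITheta, typeIPhase]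
  simp only [hu_eq, hp]
  rw [and_comm, ← tendsto_sup, ← IsOrderBornology.cobounded_eq]
  exact typeI_dark_soliton_spatial_asymptotics_general hsin ζ₀ t
end

section
/- Let ϑ ∈ (−π/2, π/2) with ϑ ≠ 0 satisfy the double-valley condition 8 cos ϑ sin²ϑ − 4 cos²ϑ sin²ϑ − 1 < 0, and set I = √(1 − 16 cos³ϑ sin²ϑ / (1 + 4 cos ϑ sin²ϑ (cos ϑ + 1))) (the center intensity) and Ī = (2cos²ϑ − 1)² |sin ϑ| / √(16 cos⁸ϑ − 48 cos⁶ϑ + 40 cos⁴ϑ − 8 cos²ϑ + 1) (the valley intensity). Then Ī < I < 1; hence the minimum intensity of the double-valley type-I dark soliton is attained at the two side valleys, not at the center. -/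
/-!
Write `c = cos ϑ`, `s = sin ϑ`, `A = 1 + 4c²s²`. Clearing denominators in the profile and putting
`v = 1 / (A + 4cs² cosh ζ)`, the squared modulus becomes the parabola `1 - 4c²A v + 4c²Q v²`, where
`Q` is the polynomial under the root in `Ī`. Its vertex is `v = A / (2Q)`, with value
`Ī² = 1 - c²A²/Q`, while the center `ζ = 0` is `v = 1 / D` with `D = 1 + 4cs²(c + 1)`. As
`Q = D D'`, where `D'` arises from `D` by `c ↦ -c`, completing the square gives
`I² - Ī² = c²(2D' - A)²/Q`, and `A - 2D'` is precisely the double-valley expression.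
-/

namespace TypeIDarkSoliton

open Real

/-- The expression whose negativity is the double-valley condition. -/
noncomputable def doubleValleyExpr (ϑ : ℝ) : ℝ :=
  8 * cos ϑ * sin ϑ ^ 2 - 4 * cos ϑ ^ 2 * sin ϑ ^ 2 - 1

/-- The denominator of the profile at `ζ = 0`, scaled by `4 cos² ϑ sin² ϑ` to a polynomial. -/
noncomputable def centerDenom (ϑ : ℝ) : ℝ :=
  1 + 4 * cos ϑ * sin ϑ ^ 2 * (cos ϑ + 1)

/-- The denominator of the squared valley intensity; up to the factor `4 cos² ϑ`, the leading
coefficient of the parabola described above. -/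
noncomputable def valleyDenom (ϑ : ℝ) : ℝ :=
  16 * cos ϑ ^ 8 - 48 * cos ϑ ^ 6 + 40 * cos ϑ ^ 4 - 8 * cos ϑ ^ 2 + 1

/-- The modulus `I` of the type-I soliton profile at `ζ = 0`, in closed form. -/
noncomputable def centerIntensity (ϑ : ℝ) : ℝ :=
  √(1 - 16 * cos ϑ ^ 3 * sin ϑ ^ 2 / centerDenom ϑ)

/-- The modulus `Ī` of the type-I soliton profile at the side valleys, in closed form. It is the
square root of the vertex value of the parabola described above; the profile attains that value,
at `ζ ≠ 0`, only in the double-valley case. -/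
noncomputable def valleyIntensity (ϑ : ℝ) : ℝ :=
  (2 * cos ϑ ^ 2 - 1) ^ 2 * |sin ϑ| / √(valleyDenom ϑ)

variable {ϑ : ℝ}

lemma centerDenom_pos (hc : cos ϑ ≠ 0) : 0 < centerDenom ϑ := by
  have sum_of_squares : centerDenom ϑ = cos ϑ ^ 2 + (sin ϑ * (2 * cos ϑ + 1)) ^ 2 := by
    rw [centerDenom, mul_pow, sin_sq]
    ring
  rw [sum_of_squares]
  positivity

lemma valleyDenom_eq_centerDenom_mul (ϑ : ℝ) :
    valleyDenom ϑ = centerDenom ϑ * centerDenom (π - ϑ) := by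
  simp only [valleyDenom, centerDenom, cos_pi_sub, sin_pi_sub, sin_sq]
  ring

lemma valleyDenom_pos (hc : cos ϑ ≠ 0) : 0 < valleyDenom ϑ := by
  rw [valleyDenom_eq_centerDenom_mul]
  exact mul_pos (centerDenom_pos hc) (centerDenom_pos (by simpa using hc))

lemma doubleValleyExpr_eq_sub_centerDenom (ϑ : ℝ) :
    doubleValleyExpr ϑ = 1 + 4 * cos ϑ ^ 2 * sin ϑ ^ 2 - 2 * centerDenom (π - ϑ) := by
  simp only [doubleValleyExpr, centerDenom, cos_pi_sub, sin_pi_sub]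
  ring

lemma valleyIntensity_nonneg (ϑ : ℝ) : 0 ≤ valleyIntensity ϑ := by
  unfold valleyIntensity
  positivity

lemma valleyIntensity_sq (hc : cos ϑ ≠ 0) :
    valleyIntensity ϑ ^ 2 =
      1 - (cos ϑ * (1 + 4 * cos ϑ ^ 2 * sin ϑ ^ 2)) ^ 2 / valleyDenom ϑ := by
  have hQ := valleyDenom_pos hc
  rw [valleyIntensity, div_pow, sq_sqrt hQ.le, mul_pow, sq_abs, one_sub_div hQ.ne']
  congr 1
  simp only [valleyDenom, sin_sq]
  ring

lemma centerIntensity_radicand_eq (hc : cos ϑ ≠ 0) :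
    1 - 16 * cos ϑ ^ 3 * sin ϑ ^ 2 / centerDenom ϑ =
      valleyIntensity ϑ ^ 2 + (cos ϑ * doubleValleyExpr ϑ) ^ 2 / valleyDenom ϑ := by
  have hD := (centerDenom_pos hc).ne'
  have hD' : centerDenom (π - ϑ) ≠ 0 := (centerDenom_pos (by simpa using hc)).ne'
  have hA : 1 + 4 * cos ϑ ^ 2 * sin ϑ ^ 2 = centerDenom (π - ϑ) + 4 * cos ϑ * sin ϑ ^ 2 := by
    simp only [centerDenom, cos_pi_sub, sin_pi_sub]
    ring
  rw [valleyIntensity_sq hc, doubleValleyExpr_eq_sub_centerDenom, valleyDenom_eq_centerDenom_mul,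
    hA]
  field_simp
  ring

lemma centerIntensity_sq (hc : cos ϑ ≠ 0) :
    centerIntensity ϑ ^ 2 =
      valleyIntensity ϑ ^ 2 + (cos ϑ * doubleValleyExpr ϑ) ^ 2 / valleyDenom ϑ := by
  have hQ := valleyDenom_pos hc
  rw [centerIntensity, centerIntensity_radicand_eq hc, sq_sqrt (by positivity)]

lemma valleyIntensity_lt_centerIntensity (hc : cos ϑ ≠ 0) (hg : doubleValleyExpr ϑ ≠ 0) :
    valleyIntensity ϑ < centerIntensity ϑ := by
  have hQ := valleyDenom_pos hc
  refine lt_of_pow_lt_pow_left₀ 2 (sqrt_nonneg _) ?_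
  rw [centerIntensity_sq hc]
  exact lt_add_of_pos_right _ (by positivity)

lemma centerIntensity_lt_one (hc : 0 < cos ϑ) (hs : sin ϑ ≠ 0) : centerIntensity ϑ < 1 := by
  have hD := centerDenom_pos hc.ne'
  rw [centerIntensity, sqrt_lt' one_pos, one_pow]
  exact sub_lt_self _ (by positivity)

end TypeIDarkSoliton

open TypeIDarkSoliton in
theorem typeI_dark_soliton_valley_below_center_general {ϑ : ℝ} (hc : 0 < Real.cos ϑ)
    (hs : Real.sin ϑ ≠ 0) (hg : doubleValleyExpr ϑ ≠ 0) :
    valleyIntensity ϑ < centerIntensity ϑ ∧ centerIntensity ϑ < 1 :=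
  ⟨valleyIntensity_lt_centerIntensity hc.ne' hg, centerIntensity_lt_one hc hs⟩

/-- For a double-valley type-I dark soliton the valley intensity `Ī` is strictly
smaller than the center intensity `I`, which is strictly smaller than the background
`1`: the minimum intensity is attained at the two side valleys. -/
theorem typeI_dark_soliton_valley_below_center
    (ϑ : ℝ) (hϑ : ϑ ∈ Set.Ioo (-(Real.pi / 2)) (Real.pi / 2)) (hϑ0 : ϑ ≠ 0)
    (hdv : 8 * Real.cos ϑ * Real.sin ϑ ^ 2 - 4 * Real.cos ϑ ^ 2 * Real.sin ϑ ^ 2 - 1 < 0)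
    (I Ibar : ℝ)
    (hI : I = Real.sqrt (1 - 16 * Real.cos ϑ ^ 3 * Real.sin ϑ ^ 2
        / (1 + 4 * Real.cos ϑ * Real.sin ϑ ^ 2 * (Real.cos ϑ + 1))))
    (hIbar : Ibar = (2 * Real.cos ϑ ^ 2 - 1) ^ 2 * |Real.sin ϑ|
        / Real.sqrt (16 * Real.cos ϑ ^ 8 - 48 * Real.cos ϑ ^ 6 + 40 * Real.cos ϑ ^ 4
            - 8 * Real.cos ϑ ^ 2 + 1)) :
    Ibar < I ∧ I < 1 := by
  have hs : Real.sin ϑ ≠ 0 := (Real.sin_eq_zero_iff_of_lt_of_lt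
    (by linarith [hϑ.1, Real.pi_pos]) (by linarith [hϑ.2, Real.pi_pos])).not.2 hϑ0
  rw [hI, hIbar]
  exact typeI_dark_soliton_valley_below_center_general (Real.cos_pos_of_mem_Ioo hϑ) hs hdv.ne
end
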